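/- arXiv:1411.4396 — 2 statements merged into one kernel-verified Lean document; each statement's English description precedes it below -/
import Mathlib

section
/- For every η > 0 there exists a unique ξ_η > √2 + 1 such that the Möbius inversion Φ_{−ξ_η e_x, η}(x) = η²(x + ξ_η e_x)/|x + ξ_η e_x|² − ξ_η e_x maps the Clifford torus 𝕋 to a surface of Euclidean area 4√2 π². Moreover η ↦ ξ_η is smooth and strictly increasing on (0,∞), with ξ_η → √2+1 as η → 0 and ξ_η → ∞ as η → ∞. -/
open Real

/-- Parametrization of the Clifford torus in `ℝ³`. -/
noncomputable def cliffordX (φ θ : ℝ) : Fin 3 → ℝ :=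
  ![(Real.sqrt 2 + Real.cos φ) * Real.cos θ,
    (Real.sqrt 2 + Real.cos φ) * Real.sin θ,
    Real.sin φ]

/-- The Euclidean area of the image of the Clifford torus under the Möbius
inversion `Φ_{−ξ e_x, η}`, expressed via the conformal factor `η⁴/|X+ξe_x|⁴`. -/
noncomputable def torArea (ξ η : ℝ) : ℝ :=
  η ^ 4 * ∫ θ in (0:ℝ)..(2 * π), ∫ φ in (0:ℝ)..(2 * π),
    (Real.sqrt 2 + Real.cos φ) /
      (((cliffordX φ θ 0 + ξ) ^ 2 + cliffordX φ θ 1 ^ 2 + cliffordX φ θ 2 ^ 2) ^ 2)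


theorem inv_abstract (F F' : ℝ → ℝ) (c K : ℝ) (hK : 0 < K)
    (hpos : ∀ ξ, c < ξ → 0 < F ξ)
    (hd : ∀ ξ, c < ξ → HasDerivAt F (F' ξ) ξ) (hneg : ∀ ξ, c < ξ → F' ξ < 0)
    (hC : ∀ ξ, c < ξ → ContDiffAt ℝ (⊤ : ℕ∞) F ξ)
    (h1 : ∀ M : ℝ, ∃ ξ, c < ξ ∧ M < F ξ) (h0 : ∀ ε : ℝ, 0 < ε → ∃ ξ, c < ξ ∧ F ξ < ε) :
    ∃ xi : ℝ → ℝ,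
      (∀ η : ℝ, 0 < η →
        xi η > c ∧ η ^ 4 * F (xi η) = K ∧
        ∀ ξ : ℝ, ξ > c → η ^ 4 * F ξ = K → ξ = xi η) ∧
      ContDiffOn ℝ (⊤ : ℕ∞) xi (Set.Ioi 0) ∧
      StrictMonoOn xi (Set.Ioi 0) ∧
      Filter.Tendsto xi (nhdsWithin 0 (Set.Ioi 0)) (nhds c) ∧
      Filter.Tendsto xi Filter.atTop Filter.atTop := by
  have hcont : ContinuousOn F (Set.Ioi c) := fun ξ hξ =>
    (hd ξ hξ).continuousAt.continuousWithinAt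
  have hanti : StrictAntiOn F (Set.Ioi c) := by
    apply strictAntiOn_of_deriv_neg (convex_Ioi c) hcont
    intro x hx
    rw [interior_Ioi] at hx
    rw [(hd x hx).deriv]
    exact hneg x hx
  have hex : ∀ y : ℝ, 0 < y → ∃ ξ, c < ξ ∧ F ξ = y := by
    intro y hy
    obtain ⟨a, ha, hay⟩ := h1 y
    obtain ⟨b, hb, hby⟩ := h0 y hy
    have := (isPreconnected_Ioi (a := c)).intermediate_value hb ha hcont ⟨hby.le, hay.le⟩
    obtain ⟨ξ, hξ, h⟩ := this
    exact ⟨ξ, hξ, h⟩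
  have hex2 : ∀ η : ℝ, ∃ ξ, 0 < η → c < ξ ∧ F ξ = K / η ^ 4 := by
    intro η
    by_cases h : 0 < η
    · obtain ⟨ξ, h⟩ := hex (K / η ^ 4) (by positivity)
      exact ⟨ξ, fun _ => h⟩
    · exact ⟨0, fun h' => absurd h' h⟩
  choose xi hxi using hex2
  have huniq : ∀ η : ℝ, 0 < η → ∀ ξ : ℝ, ξ > c → η ^ 4 * F ξ = K → ξ = xi η := by
    intro η hη ξ hξ h
    apply hanti.injOn hξ (hxi η hη).1
    rw [(hxi η hη).2, ← h]
    field_simp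
  have hmono : StrictMonoOn xi (Set.Ioi 0) := by
    intro a ha b hb hab
    have ha' : 0 < a := ha
    have hb' : 0 < b := hb
    rw [← hanti.lt_iff_gt (hxi b hb).1 (hxi a ha).1, (hxi a ha).2, (hxi b hb).2]
    gcongr
  have hsurj : ∀ b, c < b → ∃ η, 0 < η ∧ xi η = b := by
    intro b hb
    have hp := hpos b hb
    refine ⟨(K / F b) ^ ((1:ℝ)/4), by positivity, ?_⟩
    symm
    apply huniq _ (by positivity) b hb
    rw [← Real.rpow_natCast, ← Real.rpow_mul (by positivity)]
    norm_num
    field_simp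
  refine ⟨xi, fun η hη => ⟨(hxi η hη).1, ?_, huniq η hη⟩, ?_, hmono, ?_, ?_⟩
  · rw [(hxi η hη).2]; field_simp
  · intro η hη
    have hη' : 0 < η := hη
    apply ContDiffAt.contDiffWithinAt
    obtain ⟨hx1, hx2⟩ := hxi η hη
    have hn : ((⊤ : ℕ∞) : WithTop ℕ∞) ≠ 0 := by simp
    have hCa := hC _ hx1
    let e : ℝ ≃L[ℝ] ℝ := ContinuousLinearEquiv.unitsEquivAut ℝ (Units.mk0 (F' (xi η)) (hneg _ hx1).ne)
    have hfd : HasFDerivAt F (e : ℝ →L[ℝ] ℝ) (xi η) := by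
      have := (hd _ hx1).hasFDerivAt
      have he : (e : ℝ →L[ℝ] ℝ) = ContinuousLinearMap.toSpanSingleton ℝ (F' (xi η)) := by
        ext
        simp [e]
      rw [he]
      exact this
    have hst := hCa.hasStrictFDerivAt' hfd hn
    have hloc := hCa.to_localInverse hfd hn
    rw [hx2] at hloc
    have hq : ContDiffAt ℝ (⊤ : ℕ∞) (fun η : ℝ => K / η ^ 4) η :=
      contDiffAt_const.div (contDiffAt_id.pow 4) (by positivity)
    have hcomp := ContDiffAt.comp η hloc hq
    refine hcomp.congr_of_eventuallyEq ?_
    have e1 := hst.eventually_right_inverse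
    have e2 := hst.localInverse_tendsto.eventually (lt_mem_nhds hx1)
    rw [hx2] at e1 e2
    have e3 := hq.continuousAt.eventually (e1.and e2)
    filter_upwards [e3, lt_mem_nhds hη'] with y hy hy0
    apply (huniq y hy0 _ hy.2 _).symm
    show y ^ 4 * F (hst.localInverse F _ _ (K / y ^ 4)) = K
    rw [hy.1]; field_simp
  · rw [tendsto_order]
    constructor
    · intro a ha
      filter_upwards [self_mem_nhdsWithin] with η hη
      exact ha.trans (hxi η hη).1
    · intro b hb
      obtain ⟨η₀, h, hh⟩ := hsurj b hb
      filter_upwards [self_mem_nhdsWithin, mem_nhdsWithin_of_mem_nhds (gt_mem_nhds h)] with η hη hlt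
      rw [← hh]
      exact hmono hη h hlt
  · rw [Filter.tendsto_atTop]
    intro b
    obtain ⟨η₀, h, hh⟩ := hsurj (max b (c + 1)) (lt_of_lt_of_le (by linarith) (le_max_right _ _))
    filter_upwards [Filter.eventually_ge_atTop η₀] with η hη
    calc b ≤ max b (c+1) := le_max_left _ _
      _ = xi η₀ := hh.symm
      _ ≤ xi η := hmono.monotoneOn h (lt_of_lt_of_le h hη) hη

open MeasureTheory


noncomputable def tA (p : ℝ × ℝ) : ℝ := √2 + Real.cos p.2
noncomputable def tX (p : ℝ × ℝ) : ℝ := tA p * Real.cos p.1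
noncomputable def tR (p : ℝ × ℝ) : ℝ := tA p ^ 2 + Real.sin p.2 ^ 2
noncomputable def tDC (z : ℂ) (p : ℝ × ℝ) : ℂ := z ^ 2 + 2 * z * (tX p : ℂ) + (tR p : ℂ)
noncomputable def tD (z : ℝ) (p : ℝ × ℝ) : ℝ := z ^ 2 + 2 * z * tX p + tR p
noncomputable def tK (z : ℂ) (p : ℝ × ℝ) : ℂ := (tA p : ℂ) / tDC z p ^ 2
noncomputable def tK' (z : ℂ) (p : ℝ × ℝ) : ℂ := -((tA p : ℂ) * (4 * (z + tX p))) / tDC z p ^ 3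
def tS : Set (ℝ × ℝ) := Set.Ioc 0 (2 * π) ×ˢ Set.Ioc 0 (2 * π)
noncomputable def tF (ξ : ℝ) : ℝ := ∫ p in tS, tA p / tD ξ p ^ 2
noncomputable def tF' (ξ : ℝ) : ℝ := ∫ p in tS, -(tA p * (4 * (ξ + tX p))) / tD ξ p ^ 3

lemma tA_pos (p) : 0 < tA p := by
  have h1 : 1 < √2 := by rw [Real.lt_sqrt] <;> norm_num
  have := Real.neg_one_le_cos p.2
  unfold tA; linarith

lemma tA_le (p) : tA p ≤ √2 + 1 := by
  have := Real.cos_le_one p.2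
  unfold tA; linarith

lemma tA_le3 (p) : tA p ≤ 3 := by
  have h1 : √2 ≤ 2 := by rw [Real.sqrt_le_left] <;> norm_num
  linarith [tA_le p]

lemma tX_abs (p) : |tX p| ≤ tA p := by
  unfold tX
  rw [abs_mul, abs_of_pos (tA_pos p)]
  have := Real.abs_cos_le_one p.1
  nlinarith [tA_pos p]

lemma tX_ge (p) : -(√2 + 1) ≤ tX p := by
  linarith [neg_abs_le (tX p), tX_abs p, tA_le p]

lemma tX_sq_le (p) : tX p ^ 2 ≤ tR p := by
  unfold tR
  nlinarith [sq_nonneg (Real.sin p.2), sq_abs (tX p), tX_abs p, abs_nonneg (tX p)]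

lemma tD_ge (ξ : ℝ) (p) (h : √2 + 1 < ξ) : (ξ - (√2 + 1)) ^ 2 ≤ tD ξ p := by
  unfold tD
  nlinarith [tX_sq_le p, tX_ge p]

lemma tDC_ge (z : ℂ) (p) (h : √2 + 1 < z.re) : (z.re - (√2 + 1)) ^ 2 ≤ ‖tDC z p‖ := by
  set y := √(tR p - tX p ^ 2) with hy
  have hy2 : y ^ 2 = tR p - tX p ^ 2 := Real.sq_sqrt (by linarith [tX_sq_le p])
  have e : tDC z p = (z + tX p + Complex.I * y) * (z + tX p - Complex.I * y) := by
    have : ((y ^ 2 : ℝ) : ℂ) = ((tR p - tX p ^ 2 : ℝ) : ℂ) := by rw [hy2]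
    push_cast at this
    unfold tDC
    linear_combination (-1) * this + (y:ℂ) ^ 2 * Complex.I_sq
  have hx := tX_ge p
  have b1 : z.re - (√2 + 1) ≤ ‖z + tX p + Complex.I * y‖ := by
    refine le_trans ?_ (Complex.re_le_norm _)
    simp; linarith
  have b2 : z.re - (√2 + 1) ≤ ‖z + tX p - Complex.I * y‖ := by
    refine le_trans ?_ (Complex.re_le_norm _)
    simp; linarith
  rw [e, norm_mul, sq]
  gcongr

lemma tDC_ne (z : ℂ) (p) (h : √2 + 1 < z.re) : tDC z p ≠ 0 := by
  rw [← norm_pos_iff]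
  have : 0 < z.re - (√2 + 1) := by linarith
  exact lt_of_lt_of_le (by positivity) (tDC_ge z p h)

lemma tD_pos (ξ : ℝ) (p) (h : √2 + 1 < ξ) : 0 < tD ξ p := by
  have : 0 < ξ - (√2 + 1) := by linarith
  exact lt_of_lt_of_le (by positivity) (tD_ge ξ p h)

lemma tA_cont : Continuous tA := by unfold tA; fun_prop
lemma tX_cont : Continuous tX := by unfold tX; have := tA_cont; fun_prop
lemma tR_cont : Continuous tR := by unfold tR; have := tA_cont; fun_prop
lemma tD_cont (ξ) : Continuous (tD ξ) := by
  unfold tD; have := tX_cont; have := tR_cont; fun_prop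
lemma tDC_cont (ξ) : Continuous (tDC ξ) := by
  unfold tDC; have := tX_cont; have := tR_cont; fun_prop
lemma tK_cont (z : ℂ) (h : √2 + 1 < z.re) : Continuous (tK z) := by
  have := tA_cont; have := tDC_cont z
  exact Continuous.div (by fun_prop) (by fun_prop) (fun p => pow_ne_zero _ (tDC_ne z p h))
lemma tK'_cont (z : ℂ) (h : √2 + 1 < z.re) : Continuous (tK' z) := by
  have := tA_cont; have := tDC_cont z; have := tX_cont
  exact Continuous.div (by fun_prop) (by fun_prop) (fun p => pow_ne_zero _ (tDC_ne z p h))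
lemma tk_cont (z : ℝ) (h : √2 + 1 < z) : Continuous (fun p => tA p / tD z p ^ 2) := by
  have := tA_cont; have := tD_cont z
  exact Continuous.div (by fun_prop) (by fun_prop) (fun p => pow_ne_zero _ (tD_pos z p h).ne')
lemma tk'_cont (z : ℝ) (h : √2 + 1 < z) :
    Continuous (fun p => -(tA p * (4 * (z + tX p))) / tD z p ^ 3) := by
  have := tA_cont; have := tD_cont z; have := tX_cont
  exact Continuous.div (by fun_prop) (by fun_prop) (fun p => pow_ne_zero _ (tD_pos z p h).ne')

lemma tS_meas : MeasurableSet tS := measurableSet_Ioc.prod measurableSet_Ioc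

lemma tS_vol : volume.real tS = (2 * π) ^ 2 := by
  unfold tS
  rw [Measure.volume_eq_prod, measureReal_prod_prod]
  simp [Real.pi_pos.le, sq]

lemma tS_fin : volume tS ≠ ⊤ := by
  unfold tS
  rw [Measure.volume_eq_prod, Measure.prod_prod]
  simp [ENNReal.mul_eq_top]

lemma cont_int {E : Type*} [NormedAddCommGroup E] (f : ℝ × ℝ → E) (hf : Continuous f) :
    IntegrableOn f tS := by
  have : IntegrableOn f (Set.Icc 0 (2 * π) ×ˢ Set.Icc 0 (2 * π)) :=
    hf.continuousOn.integrableOn_compact (isCompact_Icc.prod isCompact_Icc)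
  exact this.mono_set (Set.prod_mono Set.Ioc_subset_Icc_self Set.Ioc_subset_Icc_self)

lemma tK_hasDeriv (z : ℂ) (p) (h : √2 + 1 < z.re) :
    HasDerivAt (fun z => tK z p) (tK' z p) z := by
  have hne := tDC_ne z p h
  have hD : HasDerivAt (fun z => tDC z p) (2 * z + 2 * tX p) z := by
    unfold tDC
    have h1 := (hasDerivAt_id z).pow 2
    have h2 := ((hasDerivAt_id z).const_mul 2).mul_const (tX p : ℂ)
    have h3 := (h1.add h2).add_const (tR p : ℂ)
    refine h3.congr_deriv ?_
    simp
  have := (hasDerivAt_const z (tA p : ℂ)).div (hD.pow 2) (pow_ne_zero 2 hne)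
  refine this.congr_deriv ?_
  unfold tK'
  simp only [Pi.pow_apply]
  field_simp
  ring

lemma tG_hasDeriv (z : ℂ) (h : √2 + 1 < z.re) :
    HasDerivAt (fun z => ∫ p in tS, tK z p) (∫ p in tS, tK' z p) z := by
  set ε := (z.re - (√2 + 1)) / 2 with hε
  have he : 0 < ε := by rw [hε]; linarith
  have hre : ∀ w ∈ Metric.ball z ε, ε ≤ w.re - (√2 + 1) := by
    intro w hw
    rw [Metric.mem_ball, dist_eq_norm] at hw
    have := (Complex.abs_re_le_norm (w - z)).trans hw.le
    rw [abs_le, Complex.sub_re] at this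
    linarith [this.1]
  have hball := Metric.ball_mem_nhds z he
  have : IsFiniteMeasure (volume.restrict tS) := ⟨by simpa using tS_fin.lt_top⟩
  refine (hasDerivAt_integral_of_dominated_loc_of_deriv_le (F := tK) (F' := tK')
    (bound := fun _ => 3 * (4 * (‖z‖ + ε + 3)) / (ε ^ 2) ^ 3) hball ?_ ?_ ?_ ?_ ?_ ?_).2
  · filter_upwards [hball] with w hw
    exact (tK_cont w (by linarith [hre w hw])).aestronglyMeasurable
  · exact cont_int _ (tK_cont z h)
  · exact (tK'_cont z h).aestronglyMeasurable
  · refine Filter.Eventually.of_forall fun p w hw => ?_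
    have hr := hre w hw
    have hD := tDC_ge w p (by linarith)
    have hD2 : ε ^ 2 ≤ ‖tDC w p‖ := le_trans (by gcongr) hD
    have hw' : ‖w‖ ≤ ‖z‖ + ε := by
      rw [Metric.mem_ball, dist_eq_norm] at hw
      have := norm_add_le z (w - z)
      rw [add_sub_cancel] at this
      linarith
    unfold tK'
    rw [norm_div, norm_neg, norm_mul, norm_mul, norm_pow]
    have n1 : ‖(tA p : ℂ)‖ ≤ 3 := by
      rw [Complex.norm_real, Real.norm_eq_abs, abs_of_pos (tA_pos p)]; exact tA_le3 p
    have n2 : ‖(4 : ℂ)‖ ≤ 4 := by simp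
    have n3 : ‖w + (tX p : ℂ)‖ ≤ ‖z‖ + ε + 3 := by
      refine (norm_add_le _ _).trans ?_
      rw [Complex.norm_real, Real.norm_eq_abs]
      linarith [tX_abs p, tA_le3 p]
    gcongr
  · exact integrable_const _
  · refine Filter.Eventually.of_forall fun p w hw => ?_
    exact tK_hasDeriv w p (by linarith [hre w hw])

lemma tG_real (ξ : ℝ) : (∫ p in tS, tK ξ p) = (tF ξ : ℂ) := by
  unfold tF
  rw [← integral_complex_ofReal]
  congr 1
  ext p
  simp [tK, tDC, tD]

lemma tG'_real (ξ : ℝ) : (∫ p in tS, tK' ξ p) = (tF' ξ : ℂ) := by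
  unfold tF'
  rw [← integral_complex_ofReal]
  congr 1
  ext p
  simp [tK', tDC, tD]

lemma tF_hasDeriv (ξ : ℝ) (h : √2 + 1 < ξ) : HasDerivAt tF (tF' ξ) ξ := by
  have h1 := (tG_hasDeriv (ξ : ℂ) (by simpa using h)).real_of_complex
  simpa [tG_real, tG'_real] using h1

lemma tF_contDiff (ξ : ℝ) (h : √2 + 1 < ξ) : ContDiffAt ℝ (⊤ : ℕ∞) tF ξ := by
  have ho : IsOpen {z : ℂ | √2 + 1 < z.re} := isOpen_lt continuous_const Complex.continuous_re
  have hd : DifferentiableOn ℂ (fun z => ∫ p in tS, tK z p) {z : ℂ | √2 + 1 < z.re} :=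
    fun z hz => (tG_hasDeriv z hz).differentiableAt.differentiableWithinAt
  have hc : ContDiffAt ℂ (⊤ : ℕ∞) (fun z => ∫ p in tS, tK z p) (ξ : ℂ) :=
    (hd.contDiffOn ho).contDiffAt (ho.mem_nhds (by simpa using h))
  have := hc.real_of_complex
  simpa [tG_real] using this

lemma int_pos (f : ℝ × ℝ → ℝ) (hf : Continuous f) (hp : ∀ p, 0 < f p) : 0 < ∫ p in tS, f p := by
  rw [integral_pos_iff_support_of_nonneg (fun p => (hp p).le) (cont_int f hf)]
  have : Function.support f = Set.univ := by
    ext p; simp [(hp p).ne']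
  rw [this, Measure.restrict_apply_univ]
  have hv := tS_vol
  rw [measureReal_def] at hv
  by_contra h0
  have h0' : volume tS = 0 := by simpa using h0
  rw [h0'] at hv
  have := Real.pi_pos
  have : 0 < (2 * π) ^ 2 := by positivity
  simp only [ENNReal.toReal_zero] at hv
  linarith

lemma tF_pos (ξ : ℝ) (h : √2 + 1 < ξ) : 0 < tF ξ :=
  int_pos _ (tk_cont ξ h) fun p => div_pos (tA_pos p) (pow_pos (tD_pos ξ p h) _)

lemma tF'_neg (ξ : ℝ) (h : √2 + 1 < ξ) : tF' ξ < 0 := by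
  have := int_pos _ (tk'_cont ξ h).neg fun p => by
    rw [Pi.neg_apply, neg_div, neg_neg]
    refine div_pos (mul_pos (tA_pos p) ?_) (pow_pos (tD_pos ξ p h) _)
    linarith [tX_ge p]
  simp only [Pi.neg_apply] at this
  rw [integral_neg] at this
  unfold tF'; linarith

lemma tF_upper (t : ℝ) (ht : 0 < t) : tF (√2 + 1 + t) ≤ (3 / t ^ 4) * (2 * π) ^ 2 := by
  have hξ : √2 + 1 < √2 + 1 + t := by linarith
  have h1 : tF (√2 + 1 + t) ≤ ∫ p in tS, 3 / t ^ 4 := by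
    unfold tF
    refine setIntegral_mono (cont_int _ (tk_cont _ hξ)) (cont_int _ continuous_const) ?_
    intro p
    have hD := tD_ge _ p hξ
    rw [add_sub_cancel_left] at hD
    have : t ^ 4 = (t ^ 2) ^ 2 := by ring
    simp only [this]
    have := tA_le3 p
    gcongr
  rw [setIntegral_const, tS_vol, smul_eq_mul] at h1
  linarith

lemma tF_lower (d : ℝ) (hd : 0 < d) (hd1 : d ≤ 1) : 1 / (256 * d ^ 2) ≤ tF (√2 + 1 + d) := by
  have hξ : √2 + 1 < √2 + 1 + d := by linarith
  set B : Set (ℝ × ℝ) := Set.Ioc π (π + d) ×ˢ Set.Ioc 0 d with hB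
  have hpi := Real.pi_gt_three
  have hBS : B ⊆ tS := by
    apply Set.prod_mono <;> apply Set.Ioc_subset_Ioc <;> linarith
  have hBm : MeasurableSet B := measurableSet_Ioc.prod measurableSet_Ioc
  have hBv : volume.real B = d ^ 2 := by
    rw [hB, Measure.volume_eq_prod, measureReal_prod_prod]
    simp [hd.le, sq]
  have hint := cont_int _ (tk_cont _ hξ)
  have hs2 : √2 ≤ 2 := by rw [Real.sqrt_le_left] <;> norm_num
  have hs1 : 1 ≤ √2 := by rw [Real.le_sqrt] <;> norm_num
  have key : ∀ p ∈ B, 1 / (16 * d ^ 2) ^ 2 ≤ tA p / tD (√2 + 1 + d) p ^ 2 := by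
    rintro ⟨θ, φ⟩ ⟨⟨h1, h2⟩, h3, h4⟩
    simp only at h1 h2 h3 h4
    have c1 : 1 - φ ^ 2 / 2 ≤ Real.cos φ := Real.one_sub_sq_div_two_le_cos
    have c1' : Real.cos φ ≤ 1 := Real.cos_le_one φ
    have c2 : 1 - (θ - π) ^ 2 / 2 ≤ Real.cos (θ - π) := Real.one_sub_sq_div_two_le_cos
    rw [Real.cos_sub_pi] at c2
    have c2' := Real.neg_one_le_cos θ
    have c3 : Real.sin φ ≤ φ := Real.sin_le h3.le
    have c4 : 0 ≤ Real.sin φ := Real.sin_nonneg_of_nonneg_of_le_pi h3.le (by linarith)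
    have hφ : φ ^ 2 ≤ d ^ 2 := by gcongr
    have hd2 : d ^ 2 ≤ d := by nlinarith
    have hθ : (θ - π) ^ 2 ≤ d ^ 2 := by
      have : 0 ≤ θ - π := by linarith
      have : θ - π ≤ d := by linarith
      gcongr
    have hs : Real.sin φ ^ 2 ≤ d ^ 2 := le_trans (by gcongr) hφ
    have ha1 : 1 ≤ tA (θ, φ) := by unfold tA; simp only; linarith
    have ha3 := tA_le3 (θ, φ)
    have hpos := tD_pos _ (θ, φ) hξ
    have hDe : tD (√2 + 1 + d) (θ, φ) = (d + (1 - Real.cos φ)) ^ 2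
        + 2 * ((√2 + 1 + d) * tA (θ, φ)) * (1 + Real.cos θ) + Real.sin φ ^ 2 := by
      unfold tD tR tX tA; ring
    have t1 : (d + (1 - Real.cos φ)) ^ 2 ≤ (3 / 2 * d) ^ 2 := by
      have : 0 ≤ d + (1 - Real.cos φ) := by linarith
      have : d + (1 - Real.cos φ) ≤ 3 / 2 * d := by linarith
      gcongr
    have t2 : (√2 + 1 + d) * tA (θ, φ) ≤ 4 * 3 := by
      have := tA_pos (θ, φ)
      gcongr
      linarith
    have t3 : 2 * ((√2 + 1 + d) * tA (θ, φ)) * (1 + Real.cos θ) ≤ 2 * (4 * 3) * (d ^ 2 / 2) := by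
      have : 1 + Real.cos θ ≤ d ^ 2 / 2 := by linarith
      have : 0 ≤ 1 + Real.cos θ := by linarith
      gcongr
    have hD : tD (√2 + 1 + d) (θ, φ) ≤ 16 * d ^ 2 := by
      rw [hDe]; nlinarith
    gcongr
  calc 1 / (256 * d ^ 2) = ∫ p in B, 1 / (16 * d ^ 2) ^ 2 := by
        rw [setIntegral_const, hBv, smul_eq_mul]; field_simp; norm_num
    _ ≤ ∫ p in B, tA p / tD (√2 + 1 + d) p ^ 2 := by
        refine setIntegral_mono_on ((cont_int _ continuous_const).mono_set hBS)
          (hint.mono_set hBS) hBm key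
    _ ≤ tF (√2 + 1 + d) := by
        refine setIntegral_mono_set hint ?_ hBS.eventuallyLE
        refine Filter.Eventually.of_forall fun p => ?_
        exact div_nonneg (tA_pos p).le (by positivity)

lemma torArea_eq (ξ η : ℝ) (h : √2 + 1 < ξ) : torArea ξ η = η ^ 4 * tF ξ := by
  unfold torArea tF tS
  rw [Measure.volume_eq_prod, setIntegral_prod _ (cont_int _ (tk_cont ξ h))]
  have h2 : (0:ℝ) ≤ 2 * π := by positivity
  simp only [intervalIntegral.integral_of_le h2]
  congr 2
  ext θ
  congr 1
  ext φ
  have e : (cliffordX φ θ 0 + ξ) ^ 2 + cliffordX φ θ 1 ^ 2 + cliffordX φ θ 2 ^ 2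
      = tD ξ (θ, φ) := by
    simp [cliffordX, tD, tX, tR, tA]
    linear_combination (√2 + Real.cos φ) ^ 2 * Real.sin_sq_add_cos_sq θ
  rw [e]
  rfl

lemma tF_unbounded (M : ℝ) : ∃ ξ, √2 + 1 < ξ ∧ M < tF ξ := by
  set d : ℝ := 1 / (16 * (|M| + 1)) with hd
  have hM := abs_nonneg M
  have hd0 : 0 < d := by positivity
  have hd1 : d ≤ 1 := by
    rw [hd, div_le_one (by positivity)]; linarith
  refine ⟨√2 + 1 + d, by linarith, lt_of_lt_of_le ?_ (tF_lower d hd0 hd1)⟩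
  have e : 1 / (256 * d ^ 2) = (|M| + 1) ^ 2 := by
    rw [hd]; field_simp; norm_num
  rw [e]
  nlinarith [le_abs_self M]

lemma tF_small (ε : ℝ) (hε : 0 < ε) : ∃ ξ, √2 + 1 < ξ ∧ tF ξ < ε := by
  set C : ℝ := 3 * (2 * π) ^ 2 with hC
  have hC0 : 0 < C := by positivity
  set t : ℝ := C / ε + 1 with ht
  have ht1 : 1 ≤ t := by
    have : 0 < C / ε := by positivity
    linarith
  refine ⟨√2 + 1 + t, by linarith, lt_of_le_of_lt (tF_upper t (by linarith)) ?_⟩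
  have h4 : t ≤ t ^ 4 := le_self_pow₀ ht1 (by norm_num)
  have ht0 : 0 < t ^ 4 := by positivity
  have h5 : ε * t = C + ε := by rw [ht]; field_simp
  have e : 3 / t ^ 4 * (2 * π) ^ 2 = C / t ^ 4 := by rw [hC]; ring
  rw [e, div_lt_iff₀ ht0]
  nlinarith

/-- For every `η > 0` there is a unique `ξ_η > √2+1` such that the Möbius inversion
`Φ_{−ξ_η e_x, η}` maps the Clifford torus to a surface of area `4√2π²`; moreover
`η ↦ ξ_η` is smooth and strictly increasing on `(0,∞)`, with `ξ_η → √2+1` as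
`η → 0⁺` and `ξ_η → ∞` as `η → ∞`. -/
theorem stmt5 :
    ∃ xi : ℝ → ℝ,
      (∀ η : ℝ, 0 < η →
        xi η > Real.sqrt 2 + 1 ∧ torArea (xi η) η = 4 * Real.sqrt 2 * π ^ 2 ∧
        ∀ ξ : ℝ, ξ > Real.sqrt 2 + 1 → torArea ξ η = 4 * Real.sqrt 2 * π ^ 2 → ξ = xi η) ∧
      ContDiffOn ℝ (⊤ : ℕ∞) xi (Set.Ioi 0) ∧
      StrictMonoOn xi (Set.Ioi 0) ∧
      Filter.Tendsto xi (nhdsWithin 0 (Set.Ioi 0)) (nhds (Real.sqrt 2 + 1)) ∧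
      Filter.Tendsto xi Filter.atTop Filter.atTop := by
  obtain ⟨xi, h1, h2⟩ := inv_abstract tF tF' (√2 + 1) (4 * √2 * π ^ 2)
    (by positivity) tF_pos tF_hasDeriv tF'_neg tF_contDiff tF_unbounded tF_small
  · refine ⟨xi, fun η hη => ?_, h2⟩
    obtain ⟨a, b, c⟩ := h1 η hη
    refine ⟨a, ?_, fun ξ hξ h => ?_⟩
    · rw [torArea_eq _ _ a]; exact b
    · rw [torArea_eq _ _ hξ] at h
      exact c ξ hξ h
end

section
/- Let ξ̃_η > 0 be defined so that the inversion Φ_{0,η} of the translated Clifford torus 𝕋_{ξ̃_η} := 𝕋 − (√2+1+ξ̃_η) e_x has Euclidean area 4√2π². Then η²/ξ̃_η → 2·(2π²)^{1/4} as η → 0; more precisely η⁴/ξ̃_η² = 4√2π + O(η²). -/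
open Real

/-- The Euclidean area of the image under `Φ_{0,η}` of the translated Clifford
torus `𝕋 − (√2+1+s)e_x`, via the conformal factor `η⁴/|Y|⁴`. -/
noncomputable def degArea (s η : ℝ) : ℝ :=
  η ^ 4 * ∫ θ in (-π)..π, ∫ φ in (-π)..π,
    (Real.sqrt 2 + Real.cos φ) /
      (((cliffordX φ θ 0 - (Real.sqrt 2 + 1 + s)) ^ 2
        + cliffordX φ θ 1 ^ 2 + cliffordX φ θ 2 ^ 2) ^ 2)


lemma inner_prim (p q A B x : ℝ) (hp : 0 < p) (hq : 0 < q) :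
    HasDerivAt (fun x => A * (sin x / ((p^2+q^2)/2 + (p^2-q^2)/2 * cos x)) +
      B * (2/(p*q)) * (x/2 + arctan ((q-p) * sin x / ((p+q)+(p-q)*cos x))))
      ((A * ((p^2+q^2)/2 * cos x + (p^2-q^2)/2) + B * ((p^2+q^2)/2 + (p^2-q^2)/2 * cos x)) /
        ((p^2+q^2)/2 + (p^2-q^2)/2 * cos x)^2) x := by
  have h1 : 0 ≤ 1 + cos x := by linarith [neg_one_le_cos x]
  have h2 : 0 ≤ 1 - cos x := by linarith [cos_le_one x]
  have hd : 0 < (p^2+q^2)/2 + (p^2-q^2)/2 * cos x := by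
    have e : (p^2+q^2)/2 + (p^2-q^2)/2 * cos x = (p^2*(1+cos x) + q^2*(1-cos x))/2 := by ring
    rw [e]
    rcases h1.eq_or_lt with h | h
    · have : 0 < 1 - cos x := by linarith
      positivity
    · positivity
  have hd2 : 0 < (p+q)+(p-q)*cos x := by
    have e : (p+q)+(p-q)*cos x = p*(1+cos x) + q*(1-cos x) := by ring
    rw [e]
    rcases h1.eq_or_lt with h | h
    · have : 0 < 1 - cos x := by linarith
      positivity
    · positivity
  have a1 := (hasDerivAt_sin x).div (((hasDerivAt_cos x).const_mul ((p^2-q^2)/2)).const_add ((p^2+q^2)/2)) hd.ne'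
  have a2 := (((hasDerivAt_sin x).const_mul (q-p)).div (((hasDerivAt_cos x).const_mul (p-q)).const_add (p+q)) hd2.ne').arctan
  have a3 := (a1.const_mul A).add ((((hasDerivAt_id x).div_const 2).add a2).const_mul (B * (2/(p*q))))
  refine a3.congr_deriv ?_
  have hs : sin x ^ 2 = 1 - cos x ^ 2 := by linarith [sin_sq_add_cos_sq x]
  have key2 : (cos x * ((p^2+q^2)/2 + (p^2-q^2)/2 * cos x) - sin x * ((p^2-q^2)/2 * -sin x)) =
      (p^2+q^2)/2 * cos x + (p^2-q^2)/2 := by linear_combination ((p^2-q^2)/2)*hs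
  have e1 : (p + q + (p - q) * cos x)^2 + ((q - p) * sin x)^2 =
      4*((p^2+q^2)/2 + (p^2-q^2)/2 * cos x) := by
    linear_combination (q-p)^2*hs
  have e2 : ((q - p) * cos x * (p + q + (p - q) * cos x) - (q - p) * sin x * ((p - q) * -sin x)) =
      2*p*q - 2*((p^2+q^2)/2 + (p^2-q^2)/2 * cos x) := by
    linear_combination (-(p-q)^2)*hs
  simp only [Pi.div_apply]
  rw [key2, e2]
  generalize (p^2+q^2)/2 + (p^2-q^2)/2 * cos x = e at *
  generalize p + q + (p - q) * cos x = d at *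
  generalize (q-p) * sin x = n at *
  have e3 : 1 + (n/d)^2 = 4*e/d^2 := by
    rw [← e1]; field_simp
  rw [e3]
  field_simp
  ring

lemma inner_int (p q A B : ℝ) (hp : 0 < p) (hq : 0 < q) :
    ∫ x in (-π)..π, ((A * ((p^2+q^2)/2 * cos x + (p^2-q^2)/2) + B * ((p^2+q^2)/2 + (p^2-q^2)/2 * cos x)) /
        ((p^2+q^2)/2 + (p^2-q^2)/2 * cos x)^2) = 2 * π * B / (p*q) := by
  rw [intervalIntegral.integral_eq_sub_of_hasDerivAt (fun x _ => inner_prim p q A B x hp hq)]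
  · simp; ring
  · apply Continuous.intervalIntegrable
    apply Continuous.div (by fun_prop) (by fun_prop)
    intro x
    have h1 : 0 ≤ 1 + cos x := by linarith [neg_one_le_cos x]
    have h2 : 0 ≤ 1 - cos x := by linarith [cos_le_one x]
    have e : (p^2+q^2)/2 + (p^2-q^2)/2 * cos x = (p^2*(1+cos x) + q^2*(1-cos x))/2 := by ring
    rw [e]
    rcases h1.eq_or_lt with h | h
    · have : 0 < 1 - cos x := by linarith
      positivity
    · positivity

/-- `√(N-D)` -/
noncomputable def Wf (s θ : ℝ) : ℝ := √((√2-1)*s^2 + 2*(√2+1+s)*(1-cos θ))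
/-- `D` -/
noncomputable def Df (s : ℝ) : ℝ := (√2+1+s)^2-1

lemma sqrt2_bd : 1.41 < √2 ∧ √2 < 1.42 := by
  constructor
  · rw [Real.lt_sqrt (by norm_num)]; norm_num
  · rw [Real.sqrt_lt' (by norm_num)]; norm_num

lemma Wsq (s θ : ℝ) (hs : 0 < s) : (Wf s θ)^2 = (√2-1)*s^2 + 2*(√2+1+s)*(1-cos θ) := by
  unfold Wf
  rw [Real.sq_sqrt]
  have := sqrt2_bd.1
  have h2 : 0 ≤ 1 - cos θ := by linarith [cos_le_one θ]
  have : 0 ≤ √2 - 1 := by linarith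
  positivity

lemma W_lower (s θ : ℝ) (hs : 0 < s) : s/2 ≤ Wf s θ := by
  unfold Wf
  apply Real.le_sqrt_of_sq_le
  have := sqrt2_bd.1
  have h2 : 0 ≤ 1 - cos θ := by linarith [cos_le_one θ]
  have : 0 ≤ 2*(√2+1+s)*(1-cos θ) := by positivity
  nlinarith [sq_nonneg s]

lemma inner_eval (s θ : ℝ) (hs : 0 < s) :
    (∫ φ in (-π)..π,
    (Real.sqrt 2 + Real.cos φ) /
      (((cliffordX φ θ 0 - (Real.sqrt 2 + 1 + s)) ^ 2
        + cliffordX φ θ 1 ^ 2 + cliffordX φ θ 2 ^ 2) ^ 2)) =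
    2 * π * ((Df s + Wf s θ^2) / (Wf s θ * √(2 * Df s + Wf s θ^2))^3) := by
  have h2 : √2^2 = 2 := Real.sq_sqrt (by norm_num)
  obtain ⟨hb1, hb2⟩ := sqrt2_bd
  have hc : 0 ≤ 1 - cos θ := by linarith [cos_le_one θ]
  have hW : 0 < Wf s θ := lt_of_lt_of_le (by positivity) (W_lower s θ hs)
  have hWs := Wsq s θ hs
  set a := √2+1+s with ha
  have hapos : 0 < a := by positivity
  have hr : √2 = √2 := rfl
  set r := √2 with hrdef
  have hD : Df s = a^2-1 := rfl
  set W := Wf s θ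
  have hDp : 0 < Df s := by rw [hD]; nlinarith
  have hPpos : 0 < (a-(r+1))^2 + 2*a*(r+1)*(1-cos θ) := by
    have : a - (r+1) = s := by rw [ha]; ring
    rw [this]; positivity
  have hQpos : 0 < (a-(r-1))^2 + 2*a*(r-1)*(1-cos θ) := by
    have : a - (r-1) = s+2 := by rw [ha]; ring
    rw [this]
    have : 0 ≤ r - 1 := by linarith
    positivity
  set p := √((a-(r+1))^2 + 2*a*(r+1)*(1-cos θ)) with hp
  set q := √((a-(r-1))^2 + 2*a*(r-1)*(1-cos θ)) with hq
  have hpp : 0 < p := Real.sqrt_pos.2 hPpos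
  have hqq : 0 < q := Real.sqrt_pos.2 hQpos
  have hp2 : p^2 = (a-(r+1))^2 + 2*a*(r+1)*(1-cos θ) := Real.sq_sqrt hPpos.le
  have hq2 : q^2 = (a-(r-1))^2 + 2*a*(r-1)*(1-cos θ) := Real.sq_sqrt hQpos.le
  have hP : (p^2+q^2)/2 = 3 + a^2 - 2*r*a*cos θ := by
    rw [hp2, hq2]; linear_combination h2
  have hQ : (p^2-q^2)/2 = 2*r - 2*a*cos θ := by
    rw [hp2, hq2]; ring
  have hN : r * ((p^2+q^2)/2) - (p^2-q^2)/2 = Df s + W^2 := by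
    rw [hP, hQ, hD, hWs]
    have : s = a - r - 1 := by rw [ha]; ring
    rw [this]
    linear_combination (a*2 - r - 1 -2*a*cos θ  ) * h2
  have hV : p * q = W * √(2 * Df s + W^2) := by
    have hn : 0 ≤ 2 * Df s + W^2 := by positivity
    rw [← sq_eq_sq₀ (by positivity) (by positivity), mul_pow, mul_pow, Real.sq_sqrt hn]
    have : W^2*(2*Df s + W^2) = (Df s + W^2)^2 - (Df s)^2 := by ring
    rw [this, ← hN]
    have : p^2*q^2 = ((p^2+q^2)/2)^2 - ((p^2-q^2)/2)^2 := by ring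
    rw [this, hP, hQ, hD]
    linear_combination (-4*a^2*cos θ^2*(r^2-1)+4*r*a*(a^2+3)*cos θ-8*r*a*cos θ-(a^2+3)^2+4*(a^2+3)-8) * h2
  have := inner_int p q ((((p^2+q^2)/2) - r * ((p^2-q^2)/2))/(p*q)^2) ((r*((p^2+q^2)/2) - ((p^2-q^2)/2))/(p*q)^2) hpp hqq
  rw [hN, hV] at this
  trans 2 * π * ((Df s + W ^ 2) / (W * √(2 * Df s + W ^ 2)) ^ 2) / (W * √(2 * Df s + W ^ 2))
  · rw [← this]
    apply intervalIntegral.integral_congr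
    intro φ _
    have hpq : (W * √(2 * Df s + W ^ 2))^2 = ((p^2+q^2)/2)^2 - ((p^2-q^2)/2)^2 := by
      rw [← hV]; ring
    have hpq0 : ((p^2+q^2)/2)^2 - ((p^2-q^2)/2)^2 ≠ 0 := by
      have : ((p^2+q^2)/2)^2 - ((p^2-q^2)/2)^2 = p^2*q^2 := by ring
      rw [this]; positivity
    have hden : (cliffordX φ θ 0 - a) ^ 2 + cliffordX φ θ 1 ^ 2 + cliffordX φ θ 2 ^ 2
        = (p^2+q^2)/2 + (p^2-q^2)/2 * cos φ := by
      rw [hP, hQ]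
      simp only [cliffordX, Matrix.cons_val_zero, Matrix.cons_val_one, Matrix.cons_val]
      rw [← hrdef]
      linear_combination (r + cos φ)^2 * sin_sq_add_cos_sq θ + sin_sq_add_cos_sq φ + h2
    have hnum : (Df s + W ^ 2) = r * ((p^2+q^2)/2) - (p^2-q^2)/2 := hN.symm
    simp only []
    rw [hden, hpq, hnum]
    generalize (p^2+q^2)/2 = P at *
    generalize (p^2-q^2)/2 = Q at *
    congr 1
    rw [div_mul_eq_mul_div, div_mul_eq_mul_div, ← add_div, eq_div_iff hpq0]
    ring
  · have : 0 < √(2 * Df s + W ^ 2) := by positivity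
    field_simp

/-- main 1D estimate -/
lemma g_bound (V0 V : ℝ) (h0 : 1 ≤ V0) (h : V0 ≤ V) :
    |(V^2 - V0^2/2)/V^3 - 1/(2*V0)| ≤ V^2 - V0^2 := by
  have hV : 0 < V := by linarith
  have e : (V^2 - V0^2/2)/V^3 - 1/(2*V0) = -((V-V0)*(V^2-V0*V-V0^2))/(2*V0*V^3) := by
    field_simp; ring
  rw [e, abs_div, abs_neg, abs_mul, abs_of_nonneg (sub_nonneg.2 h), abs_of_pos (by positivity : 0 < 2*V0*V^3),
    div_le_iff₀ (by positivity)]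
  have : |V^2-V0*V-V0^2| ≤ V^2 := by
    rw [abs_le]; constructor <;> nlinarith
  calc (V-V0) * |V^2-V0*V-V0^2| ≤ (V-V0)*V^2 := by gcongr
    _ ≤ (V-V0)*((V+V0)*(2*V0*V^3)) := by
      apply mul_le_mul_of_nonneg_left _ (sub_nonneg.2 h)
      have h1 : 1 ≤ V := by linarith
      have h3 : 1 ≤ (V+V0)*(2*V0*V) := by
        have : 1*1 ≤ V0 * V := mul_le_mul h0 h1 (by norm_num) (by linarith)
        nlinarith
      nlinarith [sq_nonneg V]
    _ = _ := by ring

lemma W_pos (s θ : ℝ) (hs : 0 < s) : 0 < Wf s θ :=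
  lt_of_lt_of_le (by positivity) (W_lower s θ hs)

lemma half_cos (x : ℝ) : 1 - cos x = 2 * sin (x/2)^2 := by
  have h := cos_two_mul (x/2)
  rw [show 2*(x/2) = x by ring] at h
  linarith [sin_sq_add_cos_sq (x/2)]

lemma main_prim (s x : ℝ) (hs : 0 < s) :
    HasDerivAt (fun θ => 2/((√2-1)*s^2) * (sin (θ/2) / Wf s θ)) (cos (x/2) / Wf s x ^ 3) x := by
  have hW := W_pos s x hs
  have hWs := Wsq s x hs
  have hk : 0 < √2 - 1 := by linarith [sqrt2_bd.1]
  have hin : HasDerivAt (fun θ => (√2-1)*s^2 + 2*(√2+1+s)*(1-cos θ)) (2*(√2+1+s)*sin x) x := by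
    have := (((hasDerivAt_cos x).const_sub 1).const_mul (2*(√2+1+s))).const_add ((√2-1)*s^2)
    refine this.congr_deriv ?_
    ring
  have hW' : HasDerivAt (fun θ => Wf s θ) (2*(√2+1+s)*sin x / (2 * Wf s x)) x := by
    refine hin.sqrt ?_
    rw [← hWs]; positivity
  have hsin : HasDerivAt (fun θ : ℝ => sin (θ/2)) (cos (x/2) * (1/2)) x :=
    ((hasDerivAt_id x).div_const 2).sin
  refine ((hsin.fun_div hW' hW.ne').const_mul (2/((√2-1)*s^2))).congr_deriv ?_
  have hsx : sin x = 2 * sin (x/2) * cos (x/2) := by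
    rw [← sin_two_mul]; congr 1; ring
  rw [half_cos] at hWs
  rw [hsx]
  generalize Wf s x = W at *
  generalize √2 - 1 = k at *
  field_simp
  linear_combination cos (x/2) * hWs

lemma D_pos (s : ℝ) (hs : 0 < s) : 4 ≤ Df s := by
  unfold Df
  have := sqrt2_bd.1
  nlinarith

lemma E_bound (s θ : ℝ) (hs : 0 < s) (hθ : |θ| ≤ π) :
    |(Df s + Wf s θ^2) / (Wf s θ * √(2 * Df s + Wf s θ^2))^3 - 1/(2*√(2*Df s)) * (cos (θ/2) / Wf s θ ^ 3)| ≤ 4 / s := by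
  have hW := W_pos s θ hs
  have hWs := Wsq s θ hs
  have hWl := W_lower s θ hs
  have hD := D_pos s hs
  have hb := sqrt2_bd
  have hV0 : 1 ≤ √(2*Df s) := by rw [Real.one_le_sqrt]; linarith
  have hV0V : √(2*Df s) ≤ √(2*Df s + Wf s θ^2) := by
    apply Real.sqrt_le_sqrt; nlinarith
  have hV0s : √(2*Df s)^2 = 2*Df s := Real.sq_sqrt (by linarith)
  have hVs : √(2*Df s + Wf s θ^2)^2 = 2*Df s + Wf s θ^2 := Real.sq_sqrt (by positivity)
  have hg := g_bound _ _ hV0 hV0V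
  have hcos : |1 - cos (θ/2)| ≤ Wf s θ^2 := by
    have hc0 : 0 ≤ cos (θ/2) := by
      apply cos_nonneg_of_neg_pi_div_two_le_of_le <;> linarith [abs_le.1 hθ]
    have hc1 := cos_le_one (θ/2)
    rw [abs_of_nonneg (by linarith), hWs, half_cos θ]
    have h1 : 1 - cos (θ/2) ≤ sin (θ/2)^2 := by nlinarith [sin_sq_add_cos_sq (θ/2)]
    have h2 : 0 ≤ (√2-1)*s^2 := mul_nonneg (by linarith) (sq_nonneg s)
    nlinarith [sq_nonneg (sin (θ/2))]
  generalize √(2*Df s + Wf s θ^2) = V at *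
  generalize √(2*Df s) = V0 at *
  generalize Wf s θ = W at *
  have e1 : V^2 - V0^2/2 = Df s + W^2 := by rw [hVs, hV0s]; ring
  have e2 : V^2 - V0^2 = W^2 := by rw [hVs, hV0s]; ring
  rw [e1, e2] at hg
  have hV : 0 < V := by linarith
  have e : (Df s + W^2) / (W * V)^3 - 1/(2*V0) * (cos (θ/2) / W ^ 3) =
      (((Df s + W^2)/V^3 - 1/(2*V0)) + 1/(2*V0) * (1 - cos (θ/2)))/W^3 := by
    field_simp; ring
  have hg0 : |1/(2*V0)| ≤ 1 := by
    rw [abs_of_pos (by positivity), div_le_one (by positivity)]; linarith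
  have hW3 : 0 < W^3 := by positivity
  rw [e, abs_div, abs_of_pos hW3]
  have : |((Df s + W^2)/V^3 - 1/(2*V0)) + 1/(2*V0) * (1 - cos (θ/2))| ≤ 2*W^2 := by
    refine (abs_add_le _ _).trans ?_
    rw [abs_mul]
    have := mul_le_mul hg0 hcos (abs_nonneg _) zero_le_one
    linarith
  rw [div_le_div_iff₀ hW3 hs]
  nlinarith [mul_le_mul_of_nonneg_right this hs.le, sq_nonneg W, mul_le_mul_of_nonneg_left hWl (sq_nonneg W)]

/-- The 1D integrand. -/
noncomputable def Ff (s θ : ℝ) : ℝ := (Df s + Wf s θ^2) / (Wf s θ * √(2 * Df s + Wf s θ^2))^3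

lemma W_cont (s : ℝ) : Continuous (Wf s) := by
  unfold Wf; fun_prop

lemma V_ge (s θ : ℝ) (hs : 0 < s) : 1 ≤ √(2 * Df s + Wf s θ^2) := by
  rw [Real.one_le_sqrt]
  nlinarith [D_pos s hs]

lemma F_cont (s : ℝ) (hs : 0 < s) : Continuous (Ff s) := by
  have := W_cont s
  unfold Ff
  apply Continuous.div (by fun_prop) (by fun_prop)
  intro θ
  have := V_ge s θ hs
  have := W_pos s θ hs
  positivity

lemma degArea_eq (s η : ℝ) (hs : 0 < s) :
    degArea s η = η^4 * (2 * π * ∫ θ in (-π)..π, Ff s θ) := by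
  unfold degArea
  congr 1
  rw [← intervalIntegral.integral_const_mul]
  apply intervalIntegral.integral_congr
  intro θ _
  exact inner_eval s θ hs

lemma main_int (s : ℝ) (hs : 0 < s) :
    ∫ θ in (-π)..π, cos (θ/2) / Wf s θ ^ 3 = 4 / ((√2-1)*s^2 * √((√2-1)*s^2 + 4*(√2+1+s))) := by
  have hc : Continuous (fun θ => cos (θ/2) / Wf s θ ^ 3) := by
    have := W_cont s
    apply Continuous.div (by fun_prop) (by fun_prop)
    intro θ
    have := W_pos s θ hs
    positivity
  rw [intervalIntegral.integral_eq_sub_of_hasDerivAt (fun x _ => main_prim s x hs) (hc.intervalIntegrable _ _)]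
  have e1 : Wf s π = √((√2-1)*s^2 + 4*(√2+1+s)) := by
    unfold Wf; rw [cos_pi]; congr 1; ring
  have e2 : Wf s (-π) = √((√2-1)*s^2 + 4*(√2+1+s)) := by
    unfold Wf; rw [cos_neg, cos_pi]; congr 1; ring
  rw [e1, e2, neg_div, sin_neg, sin_pi_div_two]
  rw [← e1]
  have := W_pos s π hs
  have hk : 0 < √2 - 1 := by linarith [sqrt2_bd.1]
  field_simp
  norm_num

lemma J_bound (s : ℝ) (hs : 0 < s) :
    |(∫ θ in (-π)..π, Ff s θ) - 1/(2*√(2*Df s)) * (4 / ((√2-1)*s^2 * √((√2-1)*s^2 + 4*(√2+1+s))))|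
      ≤ 8 * π / s := by
  have hc : Continuous (fun θ => cos (θ/2) / Wf s θ ^ 3) := by
    have := W_cont s
    apply Continuous.div (by fun_prop) (by fun_prop)
    intro θ
    have := W_pos s θ hs
    positivity
  rw [← main_int s hs, ← intervalIntegral.integral_const_mul, ← intervalIntegral.integral_sub
    ((F_cont s hs).intervalIntegrable _ _) ((hc.const_mul _).intervalIntegrable _ _)]
  have := intervalIntegral.norm_integral_le_of_norm_le_const (a := -π) (b := π) (C := 4/s)
    (f := fun θ => Ff s θ - 1/(2*√(2*Df s)) * (cos (θ/2) / Wf s θ ^ 3)) ?_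
  · rw [Real.norm_eq_abs] at this
    refine this.trans (le_of_eq ?_)
    rw [abs_of_pos (by linarith [pi_pos])]; ring
  · intro θ hθ
    rw [Set.uIoc_of_le (by linarith [pi_pos])] at hθ
    exact E_bound s θ hs (abs_le.2 ⟨hθ.1.le, hθ.2⟩)

/-- normalized area -/
noncomputable def Mf (s : ℝ) : ℝ := s^2 * (2 * π * ∫ θ in (-π)..π, Ff s θ)

lemma M_near : ∃ C : ℝ, 0 < C ∧ ∀ s, 0 < s → s ≤ 1 → |Mf s - π| ≤ C * s := by
  refine ⟨16*π^2 + 2*π, by positivity, fun s hs hs1 => ?_⟩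
  have hJ := J_bound s hs
  obtain ⟨hb1, hb2⟩ := sqrt2_bd
  have h2 : √2^2 = 2 := Real.sq_sqrt (by norm_num)
  have hk : 0 < √2 - 1 := by linarith
  have hD := D_pos s hs
  set T := (2*Df s) * ((√2-1)*s^2 + 4*(√2+1+s)) with hT
  have hsq : √(2*Df s) * √((√2-1)*s^2 + 4*(√2+1+s)) = √T := by
    exact (Real.sqrt_mul (by linarith) _).symm
  have hA : 0 < √(2*Df s) := Real.sqrt_pos.2 (by linarith)
  have hB : 0 < √((√2-1)*s^2 + 4*(√2+1+s)) := Real.sqrt_pos.2 (by positivity)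
  have hmain : s^2 * (2 * π * (1/(2*√(2*Df s)) * (4 / ((√2-1)*s^2 * √((√2-1)*s^2 + 4*(√2+1+s)))))) =
      4*π*(√2+1)/√T := by
    rw [← hsq]
    have : (√2+1) = 1/(√2-1) := by
      rw [eq_div_iff hk.ne']; linear_combination h2
    rw [this]
    field_simp
  have hTp : 0 < √T := by rw [← hsq]; positivity
  have hTs : √T^2 = T := Real.sq_sqrt (Real.sqrt_pos.1 hTp).le
  have hss : s^2 ≤ s := by nlinarith
  have hTl : (4*(√2+1))^2 ≤ T := by
    rw [hT]
    have e1 : 4*(√2+1) ≤ 2*Df s := by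
      have : Df s = 2*(√2+1)+2*(√2+1)*s+s^2 := by unfold Df; linear_combination h2
      rw [this]; nlinarith
    have e2 : 4*(√2+1) ≤ (√2-1)*s^2 + 4*(√2+1+s) := by nlinarith [mul_nonneg hk.le (sq_nonneg s)]
    rw [sq]; exact mul_le_mul e1 e2 (by positivity) (by linarith)
  have hTu : T ≤ (4*(√2+1))^2 + 230*s := by
    rw [hT]
    have e1 : 2*Df s ≤ 4*(√2+1) + 12*s := by
      have : Df s = 2*(√2+1)+2*(√2+1)*s+s^2 := by unfold Df; linear_combination h2
      rw [this]; nlinarith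
    have e2 : (√2-1)*s^2 + 4*(√2+1+s) ≤ 4*(√2+1) + 5*s := by nlinarith
    refine (mul_le_mul e1 e2 (by positivity) (by positivity)).trans ?_
    nlinarith
  have hl : 4*(√2+1) ≤ √T := Real.le_sqrt_of_sq_le hTl
  have hu : √T - 4*(√2+1) ≤ 16*s := by
    have h8 : (√T - 4*(√2+1)) * 19 ≤ (√T - 4*(√2+1)) * (√T + 4*(√2+1)) :=
      mul_le_mul_of_nonneg_left (by linarith) (by linarith)
    have h9 : (√T - 4*(√2+1)) * (√T + 4*(√2+1)) = √T^2 - (4*(√2+1))^2 := by ring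
    rw [h9, hTs] at h8
    linarith
  have hpi := pi_pos
  have h3 : |4*π*(√2+1)/√T - π| ≤ 2*π*s := by
    have : 4*π*(√2+1)/√T - π = -(π*(√T - 4*(√2+1))/√T) := by field_simp; ring
    rw [this, abs_neg, abs_of_nonneg (div_nonneg (mul_nonneg hpi.le (by linarith)) hTp.le), div_le_iff₀ hTp]
    have : √T - 4*(√2+1) ≤ 2*s*√T := by
      have : 8 * s ≤ √T * s := mul_le_mul_of_nonneg_right (by linarith) hs.le
      linarith
    nlinarith [mul_le_mul_of_nonneg_left this hpi.le]
  have h4 : |Mf s - 4*π*(√2+1)/√T| ≤ 16*π^2*s := by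
    rw [← hmain]
    unfold Mf
    rw [← mul_sub, ← mul_sub, abs_mul, abs_mul, abs_of_pos (by positivity : 0 < s^2), abs_of_pos (by positivity : 0 < 2*π)]
    calc s^2 * (2*π * _) ≤ s^2 * (2*π*(8*π/s)) := by gcongr
      _ = 16*π^2*s := by field_simp; norm_num
  have := abs_sub_le (Mf s) (4*π*(√2+1)/√T) π
  linarith

lemma M_far (s : ℝ) (hs : 1 ≤ s) : Mf s ≤ 32*π^2 := by
  have hs0 : 0 < s := by linarith
  have := intervalIntegral.norm_integral_le_of_norm_le_const (a := -π) (b := π) (C := 8/s^3)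
    (f := Ff s) ?_
  · rw [Real.norm_eq_abs, abs_of_pos (a := π - -π) (by linarith [pi_pos])] at this
    have h := (le_abs_self _).trans this
    have hpi := pi_pos
    unfold Mf
    calc s^2 * (2*π * _) ≤ s^2 * (2*π*(8/s^3*(π - -π))) := by gcongr
      _ = 32*π^2/s := by field_simp; ring
      _ ≤ 32*π^2 := div_le_self (by positivity) hs
  · intro θ _
    have hV := V_ge s θ hs0
    have hW := W_pos s θ hs0
    have hWl := W_lower s θ hs0
    have hD := D_pos s hs0
    have hVs : √(2*Df s + Wf s θ^2)^2 = 2*Df s + Wf s θ^2 := Real.sq_sqrt (by positivity)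
    unfold Ff
    rw [Real.norm_eq_abs, abs_of_nonneg (by positivity)]
    generalize √(2*Df s + Wf s θ^2) = V at *
    generalize Wf s θ = W at *
    have h1 : Df s + W^2 ≤ V^3 := by nlinarith [sq_nonneg V]
    have h2 : (s/2)^3 ≤ W^3 := by gcongr
    rw [div_le_div_iff₀ (by positivity) (by positivity), mul_pow]
    have : (Df s + W^2) * s^3 ≤ V^3 * (8*W^3) := by
      apply mul_le_mul h1 _ (by positivity) (by positivity)
      nlinarith
    linarith

theorem stmt9 (xt : ℝ → ℝ) (hpos : ∀ η : ℝ, 0 < η → 0 < xt η)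
    (harea : ∀ η : ℝ, 0 < η → degArea (xt η) η = 4 * Real.sqrt 2 * π ^ 2) :
    Filter.Tendsto (fun η => η ^ 2 / xt η) (nhdsWithin 0 (Set.Ioi 0))
      (nhds (2 * (2 * π ^ 2) ^ ((1:ℝ)/4))) ∧
    ∃ C : ℝ, ∀ᶠ η in nhdsWithin 0 (Set.Ioi 0),
      |η ^ 4 / (xt η) ^ 2 - 4 * Real.sqrt 2 * π| ≤ C * η ^ 2 := by
  obtain ⟨C, hC, hnear⟩ := M_near
  have hpi := pi_pos
  have hr : 0 < √2 := by positivity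
  -- the product identity
  have hprod : ∀ η, 0 < η → η^4 / (xt η)^2 * Mf (xt η) = 4 * √2 * π^2 := by
    intro η hη
    have hx := hpos η hη
    rw [← harea η hη, degArea_eq _ _ hx]
    unfold Mf
    field_simp
  -- uniform upper bound
  obtain ⟨K, hK, hM⟩ : ∃ K : ℝ, 0 < K ∧ ∀ s, 0 < s → Mf s ≤ K := by
    refine ⟨32*π^2 + π + C, by positivity, fun s hs => ?_⟩
    rcases le_total s 1 with h | h
    · have := (abs_le.1 (hnear s hs h)).2
      have : C * s ≤ C := by nlinarith
      have : 0 ≤ 32*π^2 := by positivity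
      linarith
    · have := M_far s h
      linarith
  set L := 4 * √2 * π^2 with hL
  have hLp : 0 < L := by positivity
  -- `xt` is `O(η²)`
  have hx : ∀ η, 0 < η → xt η ≤ √(K/L) * η^2 := by
    intro η hη
    have hxp := hpos η hη
    have h1 := hprod η hη
    have h2 : L ≤ η^4/(xt η)^2 * K := by
      rw [← h1]
      exact mul_le_mul_of_nonneg_left (hM _ hxp) (by positivity)
    apply le_of_sq_le_sq _ (by positivity)
    rw [mul_pow, Real.sq_sqrt (by positivity), div_mul_eq_mul_div, le_div_iff₀ hLp]
    rw [div_mul_eq_mul_div, le_div_iff₀ (by positivity)] at h2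
    linarith
  have hη2 : Filter.Tendsto (fun η : ℝ => η^2) (nhdsWithin 0 (Set.Ioi 0)) (nhds 0) := by
    have : Filter.Tendsto (fun η : ℝ => η^2) (nhds 0) (nhds 0) := by
      have h : Continuous (fun η : ℝ => η^2) := by fun_prop
      simpa using h.tendsto 0
    exact this.mono_left nhdsWithin_le_nhds
  have hev : ∀ᶠ η : ℝ in nhdsWithin 0 (Set.Ioi 0), √(K/L) * η^2 < min 1 (π/(2*C)) := by
    have := hη2.const_mul (√(K/L))
    rw [mul_zero] at this
    exact this.eventually_lt_const (by positivity)
  have hmain : ∀ᶠ η in nhdsWithin 0 (Set.Ioi 0),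
      |η ^ 4 / (xt η) ^ 2 - 4 * Real.sqrt 2 * π| ≤ (2*L/π^2*C*√(K/L)) * η ^ 2 := by
    filter_upwards [hev, self_mem_nhdsWithin] with η h1 hη
    have hη : 0 < η := hη
    have hxp := hpos η hη
    have hxl := hx η hη
    have hx1 : xt η ≤ 1 := by linarith [min_le_left 1 (π/(2*C))]
    have hx2 : C * xt η ≤ π/2 := by
      have : xt η ≤ π/(2*C) := by linarith [min_le_right 1 (π/(2*C))]
      rw [le_div_iff₀ (by positivity)] at this
      linarith
    have hn := hnear _ hxp hx1
    have hp := hprod η hη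
    have hy : 0 < η^4/(xt η)^2 := by positivity
    generalize η^4/(xt η)^2 = y at *
    have hMl : π/2 ≤ Mf (xt η) := by linarith [(abs_le.1 hn).1]
    have hyu : y ≤ 2*L/π := by
      rw [le_div_iff₀ hpi]; nlinarith
    have e : y - 4*√2*π = -(y * (Mf (xt η) - π) / π) := by
      field_simp
      linear_combination hp + hL
    rw [e, abs_neg, abs_div, abs_mul, abs_of_pos hy, abs_of_pos hpi]
    calc y * |Mf (xt η) - π| / π ≤ (2*L/π) * (C * (√(K/L) * η^2)) / π := by
          have : |Mf (xt η) - π| ≤ C * (√(K/L) * η^2) := hn.trans (by gcongr)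
          gcongr
      _ = _ := by field_simp
  refine ⟨?_, _, hmain⟩
  have hlim : Filter.Tendsto (fun η => η ^ 4 / (xt η) ^ 2) (nhdsWithin 0 (Set.Ioi 0)) (nhds (4*√2*π)) := by
    rw [tendsto_iff_norm_sub_tendsto_zero]
    have := hη2.const_mul (2*L/π^2*C*√(K/L))
    rw [mul_zero] at this
    exact squeeze_zero' (Filter.Eventually.of_forall fun _ => norm_nonneg _) hmain this
  have hsq := hlim.sqrt
  have hc : √(4*√2*π) = 2 * (2 * π ^ 2) ^ ((1:ℝ)/4) := by
    rw [Real.sqrt_eq_iff_mul_self_eq (by positivity) (by positivity)]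
    have h1 : ((2 * π ^ 2) ^ ((1:ℝ)/4)) * ((2 * π ^ 2) ^ ((1:ℝ)/4)) = √2*π := by
      rw [← Real.rpow_add (by positivity), show (1:ℝ)/4+1/4 = 1/2 by norm_num, ← Real.sqrt_eq_rpow,
        Real.sqrt_mul (by norm_num), Real.sqrt_sq hpi.le]
    linear_combination (-4)*h1
  rw [hc] at hsq
  refine hsq.congr' ?_
  filter_upwards [self_mem_nhdsWithin] with η hη
  have hη : 0 < η := hη
  have hxp := hpos η hη
  rw [show η^4/(xt η)^2 = (η^2/xt η)^2 by field_simp, Real.sqrt_sq (by positivity)]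
end
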